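/- There exist nonnegative real coefficients (C_w)_{w∈Λ} such that: C_{0} > 0 (where 0 denotes the one-letter word 0); for every v ∈ Λ, C_v ≤ 11699 and either C_v = 0 or C_v ≥ 6806; and for every v ∈ Λ, (27195/9091)·C_v ≤ min_{a ∈ (A∪{ε})\{l(v)}} Σ_{b∈A, vab ∈ S^{≤p}_free} C_{Λ(vab)}, where the minimum is over all a that are either the empty word ε or a letter of A different from the last letter l(v) of v (over all of A ∪ {ε} when v = ε), and the sum is over all letters b ∈ A such that vab contains no square of period at most p as a factor. -/

import Mathlib

open scoped Classical

/-- `w` contains a factor that is a square of period between `lo` and `hi`. -/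
def HasSq {A : Type*} (lo hi : ℕ) (w : List A) : Prop :=
  ∃ u : List A, lo ≤ u.length ∧ u.length ≤ hi ∧ (u ++ u) <:+: w

/-- `w` is a square of period between `lo` and `hi`. -/
def IsSq {A : Type*} (lo hi : ℕ) (w : List A) : Prop :=
  ∃ u : List A, lo ≤ u.length ∧ u.length ≤ hi ∧ w = u ++ u

/-- `w` is a minimal square of period between `lo` and `hi`: it is such a square and no
proper factor of it is such a square. -/
def MinSq {A : Type*} (lo hi : ℕ) (w : List A) : Prop :=
  IsSq lo hi w ∧ ∀ f : List A, f <:+: w → f ≠ w → ¬ IsSq lo hi f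

/-- A word is normalized if it is lexicographically least among its images under
permutations of the alphabet. -/
def Normalized {A : Type*} [LinearOrder A] (w : List A) : Prop :=
  ∀ π : Equiv.Perm A, ¬ List.Lex (· < ·) (w.map π) w

/-- `Λ`: the set of normalized words that are proper prefixes of minimal squares of
period between `lo` and `hi`. -/
def Lam {A : Type*} [LinearOrder A] (lo hi : ℕ) : Set (List A) :=
  {w | Normalized w ∧ ∃ s : List A, MinSq lo hi s ∧ w <+: s ∧ w ≠ s}

/-- `Λ(w)`: the longest element of `Λ` that is, up to a permutation of the alphabet,
a suffix of `w`. -/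
noncomputable def lamOf {A : Type*} [LinearOrder A] (lo hi : ℕ) (w : List A) : List A :=
  if h : ∃ v : List A,
      (v ∈ Lam lo hi ∧ ∃ π : Equiv.Perm A, v.map π <:+ w) ∧
      ∀ v' : List A, (v' ∈ Lam lo hi ∧ ∃ π : Equiv.Perm A, v'.map π <:+ w) →
        v'.length ≤ v.length
  then h.choose else []

/-!
A near-square is a word of length `2q - 1` and period `q ≤ 8`, that is, a square deprived of its
first or of its last letter. Words that end in a near-square get the coefficient `0`. A square-free
word that does not end in a near-square stays square-free after the insertion of any letter `a`
different from its last one, because a square of period at least `2` created by `a` leaves a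
near-square when `a` is removed. Words are reversed throughout, so that letters are added in front
of a list.

The coefficient of any other word is `11699`, lowered when a repetition of period `5` to `8` is in
progress by a few steps of power iteration along its continuation. By construction it can only
decrease when the word is extended to the left, and it is invariant under permutations of the
alphabet. Hence `C_{Λ(w)} ≥ C_w`, and it suffices to bound `∑ b, C_{vab}` from below.

If at most two letters are excluded by near-squares, at least four remain, at most three of which
lead to a weight below `11699`, and this is enough. There are finitely many other pairs `(v, a)` to
examine, because a normalized word in `Λ` is `u ++ p` with `p` a prefix of `u` and `|u| ≤ 8`; they
are enumerated by a depth-first search evaluated in the kernel.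
-/

section Squares

variable {α β : Type*} {lo hi : ℕ} {w w' : List α}

theorem HasSq.of_infix (h : HasSq lo hi w) (hw : w <:+: w') : HasSq lo hi w' :=
  let ⟨u, hlo, hhi, hu⟩ := h
  ⟨u, hlo, hhi, hu.trans hw⟩

theorem HasSq.map (h : HasSq lo hi w) (f : α → β) : HasSq lo hi (w.map f) := by
  obtain ⟨u, hlo, hhi, hu⟩ := h
  exact ⟨u.map f, by simpa using hlo, by simpa using hhi, by simpa using hu.map f⟩

theorem HasSq.reverse (h : HasSq lo hi w) : HasSq lo hi w.reverse := by
  obtain ⟨u, hlo, hhi, hu⟩ := h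
  exact ⟨u.reverse, by simpa using hlo, by simpa using hhi, by simpa using List.reverse_infix.2 hu⟩

theorem hasSq_reverse : HasSq lo hi w.reverse ↔ HasSq lo hi w :=
  ⟨fun h => by simpa using h.reverse, HasSq.reverse⟩

theorem HasSq.exists_prefix_of_cons {c : α} {r : List α} (h : HasSq 1 hi (c :: r))
    (hr : ¬ HasSq 1 hi r) : ∃ x t, x.length < hi ∧ r = x ++ c :: t ∧ x <+: t := by
  obtain ⟨u, hlo, hhi, hu⟩ := h
  rcases List.infix_cons_iff.1 hu with hu | hu
  · match u with
    | d :: x =>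
      rw [List.cons_append, List.cons_prefix_cons] at hu
      obtain ⟨rfl, t, rfl⟩ := hu
      exact ⟨x, x ++ t, hhi, by simp, List.prefix_append x t⟩
  · exact absurd ⟨u, hlo, hhi, hu⟩ hr

end Squares

namespace SquareWeight

section Repetitions

variable {α β : Type*} [DecidableEq α] [DecidableEq β] {k n p : ℕ} {a c : α} {r s : List α}

/-- Whether the first `k` letters of `r` and of `s` exist and coincide. Here and in `completions`,
raw recursors are used because the kernel evaluates them faster than compiled equations. -/
def agree (k : ℕ) : List α → List α → Bool :=
  k.rec (fun _ _ => true) fun _ ih r s =>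
    r.rec false fun a r _ => s.rec false fun b s _ => (decide (a = b)).rec false (ih r s)

theorem agree_zero (r s : List α) : agree 0 r s := rfl

theorem agree_succ_cons_cons (k : ℕ) (a b : α) (r s : List α) :
    agree (k + 1) (a :: r) (b :: s) = (decide (a = b) && agree k r s) := by
  by_cases h : a = b <;> simp [agree, h]

theorem agree_iff : agree k r s ↔ ∃ x : List α, x.length = k ∧ x <+: r ∧ x <+: s := by
  induction k generalizing r s with
  | zero => exact iff_of_true (agree_zero r s) ⟨[], rfl, List.nil_prefix, List.nil_prefix⟩
  | succ k ih =>
    match r, s with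
    | [], _ =>
      refine iff_of_false Bool.false_ne_true ?_
      rintro ⟨x, hx, hr, -⟩
      simp [List.prefix_nil.1 hr] at hx
    | _ :: _, [] =>
      refine iff_of_false Bool.false_ne_true ?_
      rintro ⟨x, hx, -, hs⟩
      simp [List.prefix_nil.1 hs] at hx
    | a :: r, b :: s =>
      rw [agree_succ_cons_cons, Bool.and_eq_true, decide_eq_true_iff, ih]
      constructor
      · rintro ⟨rfl, x, rfl, hr, hs⟩
        exact ⟨a :: x, rfl, (List.prefix_cons_inj a).2 hr, (List.prefix_cons_inj a).2 hs⟩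
      · rintro ⟨_ | ⟨d, x⟩, hx, hr, hs⟩
        · simp at hx
        · obtain ⟨rfl, hxr⟩ := List.cons_prefix_cons.1 hr
          obtain ⟨rfl, hxs⟩ := List.cons_prefix_cons.1 hs
          exact ⟨rfl, x, Nat.succ.inj hx, hxr, hxs⟩

theorem agree_succ_cons : agree (k + 1) (a :: r) s ↔ ∃ t, s = a :: t ∧ agree k r t := by
  rcases s with _ | ⟨b, s⟩
  · simp [agree]
  · rw [agree_succ_cons_cons]
    simp [@eq_comm _ b]

theorem agree_map_append (h : agree k r s) (f : α → β) (t t' : List β) :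
    agree k (r.map f ++ t) (s.map f ++ t') := by
  obtain ⟨x, hx, hr, hs⟩ := agree_iff.1 h
  exact agree_iff.2 ⟨x.map f, by simpa using hx, (hr.map f).trans (List.prefix_append _ _),
    (hs.map f).trans (List.prefix_append _ _)⟩

theorem getElem?_eq_of_agree {i : ℕ} (h : agree k r s) (hi : i < k) : s[i]? = r[i]? := by
  obtain ⟨x, rfl, ⟨r', rfl⟩, ⟨s', rfl⟩⟩ := agree_iff.1 h
  rw [List.getElem?_append_left hi, List.getElem?_append_left hi]

theorem agree_length_of_prefix {x : List α} (hr : x <+: r) (hs : x <+: s) :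
    agree x.length r s :=
  agree_iff.2 ⟨x, rfl, hr, hs⟩

/-- The letters at the positions `i < n` of `s` that are followed in `s` by the first `k + i`
letters of `r`. -/
def completions (n : ℕ) : ℕ → List α → List α → List α :=
  n.rec (fun _ _ _ => []) fun _ ih k r s =>
    s.rec [] fun b s _ => (agree k r s).rec (ih (k + 1) r s) (b :: ih (k + 1) r s)

theorem completions_succ_cons (n k : ℕ) (r : List α) (b : α) (s : List α) :
    completions (n + 1) k r (b :: s) =
      if agree k r s then b :: completions n (k + 1) r s else completions n (k + 1) r s := by
  cases h : agree k r s <;> simp [completions, h]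

theorem mem_completions :
    c ∈ completions n k r s ↔
      ∃ x t, s = x ++ c :: t ∧ x.length < n ∧ agree (k + x.length) r t := by
  induction n generalizing k s with
  | zero => simp [completions]
  | succ n ih =>
    rcases s with _ | ⟨b, s⟩
    · simp [completions]
    · have hmem : c ∈ completions (n + 1) k r (b :: s) ↔
          (c = b ∧ agree k r s) ∨ c ∈ completions n (k + 1) r s := by
        rw [completions_succ_cons]
        split_ifs with h <;> simp [h]
      rw [hmem, ih]
      constructor
      · rintro (⟨rfl, h⟩ | ⟨x, t, rfl, hx, h⟩)
        · exact ⟨[], s, rfl, n.succ_pos, h⟩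
        · refine ⟨b :: x, t, rfl, Nat.succ_lt_succ hx, ?_⟩
          rwa [List.length_cons, ← Nat.add_assoc, Nat.add_right_comm]
      · rintro ⟨_ | ⟨d, x⟩, t, hs, hx, h⟩
        · obtain ⟨rfl, rfl⟩ := List.cons.inj hs
          exact Or.inl ⟨rfl, h⟩
        · obtain ⟨rfl, rfl⟩ := List.cons.inj hs
          refine Or.inr ⟨x, t, rfl, Nat.lt_of_succ_lt_succ hx, ?_⟩
          rwa [List.length_cons, ← Nat.add_assoc, Nat.add_right_comm] at h

theorem map_completions_sublist (n k : ℕ) (r s : List α) (f : α → β) (t t' : List β) :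
    ((completions n k r s).map f).Sublist (completions n k (r.map f ++ t) (s.map f ++ t')) := by
  induction n generalizing k s with
  | zero => exact List.nil_sublist _
  | succ n ih =>
    rcases s with _ | ⟨b, s⟩
    · exact List.nil_sublist _
    · rw [List.map_cons, List.cons_append, completions_succ_cons, completions_succ_cons]
      by_cases h : agree k r s
      · rw [if_pos h, if_pos (agree_map_append h f t t')]
        exact (ih (k + 1) s).cons_cons (f b)
      · rw [if_neg h]
        split_ifs
        · exact (ih (k + 1) s).cons (f b)
        · exact ih (k + 1) s

theorem mem_completions_of_completions_cons_ne_nil {b : α}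
    (h : completions n (k + 1) (a :: r) (b :: s) ≠ []) : a ∈ completions n k r s := by
  obtain ⟨d, hd⟩ := List.exists_mem_of_ne_nil _ h
  obtain ⟨x, t, hs, hx, ht⟩ := mem_completions.1 hd
  rw [Nat.add_right_comm, agree_succ_cons] at ht
  obtain ⟨t, rfl, ht⟩ := ht
  refine mem_completions.2 ⟨(x ++ [d]).tail, t, ?_, by simpa using hx, by simpa using ht⟩
  rw [← List.tail_append_of_ne_nil (by simp), List.append_assoc, List.singleton_append, ← hs,
    List.tail_cons]

/-- The letters whose addition in front of `r` creates a prefix that is a square of period at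
most `p`. -/
def squareLetters (p : ℕ) (r : List α) : List α := completions p 0 r r

theorem hasSq_cons_of_mem_squareLetters (h : c ∈ squareLetters p r) : HasSq 1 p (c :: r) := by
  obtain ⟨x, t, rfl, hx, ht⟩ := mem_completions.1 h
  obtain ⟨y, hy, hyr, hyt⟩ := agree_iff.1 ht
  obtain rfl : y = x :=
    (List.prefix_of_prefix_length_le hyr (List.prefix_append x _) (by simp [hy])).eq_of_length
      (by simpa using hy)
  refine ⟨c :: y, by simp, hx, List.IsPrefix.isInfix ?_⟩
  simpa using hyt

/-- The letters whose addition in front of `r` creates a prefix that is a near-square: a square of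
period at most `p` deprived of its last letter. The first letter of `r` is always one of them. -/
def near (p : ℕ) : List α → List α
  | [] => []
  | b :: t => b :: completions (p - 1) 0 (b :: t) t

theorem mem_near {x t : List α} (hr : r = x ++ c :: t) (hx : x.length < p)
    (h : agree (x.length - 1) r t) : c ∈ near p r := by
  rcases x with _ | ⟨b, x⟩
  · simp [hr, near]
  · subst hr
    refine List.mem_cons_of_mem b (mem_completions.2 ⟨x, t, rfl, Nat.lt_sub_of_add_lt hx, ?_⟩)
    simpa using h

theorem mem_near_of_getElem? {i : ℕ} (hi : i ≤ 1) (hp : i < p) (h : r[i]? = some c) :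
    c ∈ near p r := by
  obtain ⟨hr, rfl⟩ := List.getElem?_eq_some_iff.1 h
  refine mem_near (x := r.take i) (t := r.drop (i + 1)) (by simp) (by simp; lia) ?_
  rw [List.length_take, Nat.sub_eq_zero_of_le (by lia)]
  exact agree_zero _ _

theorem map_near_sublist (p : ℕ) (r : List α) (f : α → β) (t : List β) :
    ((near p r).map f).Sublist (near p (r.map f ++ t)) := by
  rcases r with _ | ⟨b, r⟩
  · exact List.nil_sublist _
  · exact (map_completions_sublist (p - 1) 0 (b :: r) r f t t).cons_cons (f b)

/-- Whether `r` starts with a near-square. -/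
def startsNear (p : ℕ) : List α → Bool
  | [] => false
  | c :: r => c ∈ near p r

theorem startsNear_of_hasSq_cons (h : HasSq 1 p (c :: r)) (hr : ¬ HasSq 1 p r) :
    startsNear p (c :: r) := by
  obtain ⟨x, t, hx, rfl, t', rfl⟩ := h.exists_prefix_of_cons hr
  refine decide_eq_true (mem_near rfl hx (agree_iff.2 ⟨x.take (x.length - 1), by simp, ?_, ?_⟩))
  · exact (List.take_prefix _ x).trans (List.prefix_append x _)
  · exact (List.take_prefix _ x).trans (List.prefix_append x _)

theorem startsNear_map_append (h : startsNear p r) (f : α → β) (t : List β) :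
    startsNear p (r.map f ++ t) := by
  rcases r with _ | ⟨c, r⟩
  · exact absurd h Bool.false_ne_true
  · exact decide_eq_true ((map_near_sublist p r f t).subset
      (List.mem_map_of_mem (of_decide_eq_true h)))

/-- A square created by a letter `a` different from the first letter of `r` has period at least
two, so it loses its first letter and leaves a near-square at the front of `r`. -/
theorem not_hasSq_cons (hr : ¬ HasSq 1 p r) (hnear : ¬ startsNear p r)
    (ha : r.head? ≠ some a) : ¬ HasSq 1 p (a :: r) := by
  intro h
  obtain ⟨_ | ⟨d, x⟩, t, hx, rfl, t', rfl⟩ := h.exists_prefix_of_cons hr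
  · simp at ha
  · refine hnear (decide_eq_true (mem_near (x := x ++ [a]) (t := x ++ t') (by simp)
      (by simpa using hx) ?_))
    rw [List.length_append, List.length_singleton, Nat.add_sub_cancel]
    exact agree_length_of_prefix (by simp) (List.prefix_append x t')

end Repetitions

section Weights

variable {r : List (Fin 6)} {f g : Fin 6 → ℕ}

/-- The sum of `f` over the letters whose addition in front of `r` creates no near-square. -/
def freeSum (r : List (Fin 6)) (f : Fin 6 → ℕ) : ℕ :=
  ∑ c, if c ∈ near 8 r then 0 else f c

/-- First approximation of the weight of a word without near-square at its front. The two patterns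
that lower the weight even though no long repetition is in progress, and their weight `11602`, were
found numerically. -/
def baseWeight : List (Fin 6) → ℕ
  | a :: b :: c :: d :: e :: f :: g :: t =>
    if a = f ∧ b = e ∧ d = g ∨ a = d ∧ b = g ∧ c = f ∧ t.head? = some e then 11602 else 11699
  | _ => 11699

/-- One step of the power iteration at `r`: the weight that `r` can be given when its extension by
`b` has weight `v` and its other extensions have their base weight, clamped to `[7789, 11699]`. The
first case is a shortcut: with at least four letters to choose from, the upper bound is reached. -/
def stepWeight (r : List (Fin 6)) (b : Fin 6) (v : ℕ) : ℕ :=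
  if (near 8 r).length ≤ 2 then 11699 else
    max 7789 (min 11699
      (9091 * freeSum r (Function.update (fun c => baseWeight (c :: r)) b v) / 27195))

/-- The power iteration along the extension of `r` by the successive letters of `u`, where the
letter `a` of the inequality to satisfy is either empty or the next letter of `u`. -/
def runWeight : List (Fin 6) → List (Fin 6) → ℕ
  | a :: b :: u, r =>
    min (stepWeight r a (runWeight (b :: u) (a :: r)))
      (stepWeight (a :: r) b (runWeight u (b :: a :: r)))
  | _, _ => 11699

/-- With `u` the reversed prefix of length `q` of `r`, and `s` the rest of `r`: the least
`runWeight` of `r` along the periods `q, q + 1, …` for which the repetition in progress has reached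
the length prescribed by the corresponding entry of the list. -/
def minRunWeight (r : List (Fin 6)) : List ℕ → List (Fin 6) → List (Fin 6) → ℕ
  | k :: ks, u, b :: s =>
    if agree k r (b :: s) then min (runWeight u r) (minRunWeight r ks (b :: u) s)
    else minRunWeight r ks (b :: u) s
  | _, _, _ => baseWeight r

/-- The weight of a word without near-square at its front. The repetitions taken into account have
period `5, 6, 7, 8` and length at least `6, 8, 9, 9` respectively: these thresholds were found
numerically. -/
def coreWeight (r : List (Fin 6)) : ℕ :=
  minRunWeight r [1, 2, 2, 1] (r.take 5).reverse (r.drop 5)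

/-- The coefficient of the word whose reversal is `r`. -/
def weight (r : List (Fin 6)) : ℕ := if startsNear 8 r then 0 else coreWeight r

theorem freeSum_coreWeight (r : List (Fin 6)) :
    (freeSum r fun c => coreWeight (c :: r)) = ∑ c, weight (c :: r) := by
  simp only [freeSum, weight, startsNear, decide_eq_true_eq]

theorem freeSum_map_append_le (π : Equiv.Perm (Fin 6)) (t : List (Fin 6))
    (hfg : ∀ c, f (π c) ≤ g c) : freeSum (r.map π ++ t) f ≤ freeSum r g := by
  rw [freeSum, freeSum, ← Equiv.sum_comp π]
  refine Finset.sum_le_sum fun c _ => ?_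
  by_cases hc : c ∈ near 8 r
  · rw [if_pos ((map_near_sublist 8 r π t).subset (List.mem_map_of_mem hc))]
    exact Nat.zero_le _
  · rw [if_neg hc]
    split_ifs
    exacts [Nat.zero_le _, hfg c]

theorem baseWeight_le (r : List (Fin 6)) : baseWeight r ≤ 11699 := by
  unfold baseWeight
  split
  · split_ifs <;> norm_num
  · exact le_rfl

theorem le_baseWeight (r : List (Fin 6)) : 7789 ≤ baseWeight r := by
  unfold baseWeight
  split
  · split_ifs <;> norm_num
  · norm_num

theorem baseWeight_map_append_le (π : Equiv.Perm (Fin 6)) (r t : List (Fin 6)) :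
    baseWeight (r.map π ++ t) ≤ baseWeight r := by
  match r with
  | a :: b :: c :: d :: e :: f :: g :: s =>
    simp only [List.map_cons, List.cons_append, baseWeight, π.injective.eq_iff]
    by_cases h : a = f ∧ b = e ∧ d = g ∨ a = d ∧ b = g ∧ c = f ∧ s.head? = some e
    · rw [if_pos h, if_pos]
      refine h.imp_right fun ⟨had, hbg, hcf, hse⟩ => ⟨had, hbg, hcf, ?_⟩
      simp [hse]
    · rw [if_neg h]
      split_ifs <;> norm_num
  | [] | [_] | [_, _] | [_, _, _] | [_, _, _, _] | [_, _, _, _, _] | [_, _, _, _, _, _] =>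
    exact baseWeight_le _

theorem stepWeight_le (r : List (Fin 6)) (b : Fin 6) (v : ℕ) : stepWeight r b v ≤ 11699 := by
  unfold stepWeight
  split_ifs
  exacts [le_rfl, max_le (by norm_num) (min_le_left _ _)]

theorem le_stepWeight (r : List (Fin 6)) (b : Fin 6) (v : ℕ) : 7789 ≤ stepWeight r b v := by
  unfold stepWeight
  split_ifs
  · norm_num
  · exact le_max_left _ _

theorem stepWeight_map_append_le (π : Equiv.Perm (Fin 6)) (r t : List (Fin 6)) (b : Fin 6)
    {v w : ℕ} (hvw : v ≤ w) : stepWeight (r.map π ++ t) (π b) v ≤ stepWeight r b w := by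
  by_cases h : (near 8 r).length ≤ 2
  · rw [stepWeight.eq_def r, if_pos h]
    exact stepWeight_le _ _ _
  · have hnear : ¬ (near 8 (r.map π ++ t)).length ≤ 2 := fun h' =>
      h (by simpa using (map_near_sublist 8 r π t).length_le.trans h')
    rw [stepWeight, stepWeight, if_neg h, if_neg hnear]
    gcongr
    refine freeSum_map_append_le π t fun c => ?_
    rcases eq_or_ne c b with rfl | hc
    · simpa using hvw
    · simpa [hc] using baseWeight_map_append_le π (c :: r) t

theorem le_runWeight (u r : List (Fin 6)) : 7789 ≤ runWeight u r := by
  match u with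
  | a :: b :: u => exact le_min (le_stepWeight _ _ _) (le_stepWeight _ _ _)
  | [] | [_] => norm_num [runWeight]

theorem runWeight_map_append_le (π : Equiv.Perm (Fin 6)) (t : List (Fin 6)) :
    ∀ u r : List (Fin 6), runWeight (u.map π) (r.map π ++ t) ≤ runWeight u r
  | a :: b :: u, r => by
    simp only [List.map_cons, runWeight]
    exact min_le_min
      (stepWeight_map_append_le π r t a (runWeight_map_append_le π t (b :: u) (a :: r)))
      (stepWeight_map_append_le π (a :: r) t b (runWeight_map_append_le π t u (b :: a :: r)))
  | [], _ | [_], _ => by simp only [List.map_nil, List.map_cons, runWeight, le_rfl]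

theorem minRunWeight_le_baseWeight (r : List (Fin 6)) (ks : List ℕ) (u s : List (Fin 6)) :
    minRunWeight r ks u s ≤ baseWeight r := by
  induction ks generalizing u s with
  | nil => simp only [minRunWeight, le_rfl]
  | cons k ks ih =>
    rcases s with _ | ⟨b, s⟩
    · simp only [minRunWeight, le_rfl]
    · rw [minRunWeight]
      split_ifs
      exacts [(min_le_right _ _).trans (ih _ _), ih _ _]

theorem le_minRunWeight (r : List (Fin 6)) (ks : List ℕ) (u s : List (Fin 6)) :
    7789 ≤ minRunWeight r ks u s := by
  induction ks generalizing u s with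
  | nil => exact le_baseWeight r
  | cons k ks ih =>
    rcases s with _ | ⟨b, s⟩
    · exact le_baseWeight r
    · rw [minRunWeight]
      split_ifs
      exacts [le_min (le_runWeight u r) (ih _ _), ih _ _]

theorem minRunWeight_map_append_le (π : Equiv.Perm (Fin 6)) (r t : List (Fin 6)) (ks : List ℕ)
    (u s t' : List (Fin 6)) :
    minRunWeight (r.map π ++ t) ks (u.map π) (s.map π ++ t') ≤ minRunWeight r ks u s := by
  have hbase (u s : List (Fin 6)) (ks : List ℕ) :
      minRunWeight (r.map π ++ t) ks u s ≤ baseWeight r :=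
    (minRunWeight_le_baseWeight _ _ _ _).trans (baseWeight_map_append_le π r t)
  induction ks generalizing u s with
  | nil => exact hbase _ _ _
  | cons k ks ih =>
    rcases s with _ | ⟨b, s⟩
    · exact hbase _ _ _
    · rw [List.map_cons, List.cons_append, minRunWeight, minRunWeight]
      by_cases h : agree k r (b :: s)
      · have h' : agree k (r.map π ++ t) (π b :: (s.map π ++ t')) := agree_map_append h π t t'
        rw [if_pos h, if_pos h']
        exact min_le_min (runWeight_map_append_le π t u r) (ih (b :: u) s)
      · rw [if_neg h]
        split_ifs
        exacts [(min_le_right _ _).trans (ih (b :: u) s), ih (b :: u) s]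

theorem coreWeight_le (r : List (Fin 6)) : coreWeight r ≤ 11699 :=
  (minRunWeight_le_baseWeight _ _ _ _).trans (baseWeight_le r)

theorem le_coreWeight (r : List (Fin 6)) : 7789 ≤ coreWeight r := le_minRunWeight _ _ _ _

theorem coreWeight_map_append_le (π : Equiv.Perm (Fin 6)) (r t : List (Fin 6)) :
    coreWeight (r.map π ++ t) ≤ coreWeight r := by
  rcases le_total 5 r.length with h | h
  · have := minRunWeight_map_append_le π r t [1, 2, 2, 1] (r.take 5).reverse (r.drop 5) t
    rwa [List.map_reverse, List.map_take, List.map_drop, ← List.take_append_of_le_length (by simpa),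
      ← List.drop_append_of_le_length (by simpa)] at this
  · rw [coreWeight, coreWeight, List.drop_eq_nil_of_le h]
    exact (minRunWeight_le_baseWeight _ _ _ _).trans (baseWeight_map_append_le π r t)

theorem weight_map_append_le (π : Equiv.Perm (Fin 6)) (r t : List (Fin 6)) :
    weight (r.map π ++ t) ≤ weight r := by
  unfold weight
  by_cases h : startsNear 8 r
  · rw [if_pos (startsNear_map_append h π t)]
    exact Nat.zero_le _
  · rw [if_neg h]
    split_ifs
    exacts [Nat.zero_le _, coreWeight_map_append_le π r t]

theorem weight_le (r : List (Fin 6)) : weight r ≤ 11699 := by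
  unfold weight
  split_ifs
  exacts [Nat.zero_le _, coreWeight_le r]

theorem weight_eq_zero_or_le (r : List (Fin 6)) : weight r = 0 ∨ 7789 ≤ weight r := by
  unfold weight
  split_ifs
  exacts [Or.inl rfl, Or.inr (le_coreWeight r)]

end Weights

section FewNearLetters

variable {c : Fin 6} {r x : List (Fin 6)}

theorem minRunWeight_eq_baseWeight {ks : List ℕ} {u s : List (Fin 6)}
    (h : ∀ (i : ℕ) (hi : i < ks.length), ¬ agree ks[i] r (s.drop i)) :
    minRunWeight r ks u s = baseWeight r := by
  induction ks generalizing u s with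
  | nil => simp only [minRunWeight]
  | cons k ks ih =>
    rcases s with _ | ⟨b, s⟩
    · simp only [minRunWeight]
    · have hk : ¬ agree k r (b :: s) := h 0 (Nat.succ_pos _)
      rw [minRunWeight, if_neg hk]
      exact ih fun i hi => h (i + 1) (Nat.succ_lt_succ hi)

theorem getElem?_of_baseWeight_cons_ne (h : baseWeight (c :: x) ≠ 11699) :
    x[4]? = some c ∨ x[0]? = x[5]? ∧ x[1]? = x[4]? ∧ x[2]? = some c := by
  match x with
  | b :: c' :: d :: e :: f :: g :: t =>
    rw [baseWeight, ite_ne_right_iff] at h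
    rcases h.1 with ⟨rfl, -, -⟩ | ⟨rfl, rfl, rfl, -⟩
    · exact Or.inl rfl
    · exact Or.inr ⟨rfl, rfl, rfl⟩
  | [] | [_] | [_, _] | [_, _, _] | [_, _, _, _] | [_, _, _, _, _] => exact absurd rfl h

theorem getElem?_of_coreWeight_cons_ne (h : coreWeight (c :: x) ≠ 11699) :
    x[4]? = some c ∨ x[7]? = some c ∨ x[0]? = x[6]? ∧ x[5]? = some c ∨
      x[0]? = x[7]? ∧ x[6]? = some c ∨ x[0]? = x[5]? ∧ x[1]? = x[4]? ∧ x[2]? = some c := by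
  by_contra! hx
  obtain ⟨h4, h7, h5, h6, h2⟩ := hx
  have first {k q : ℕ} (hk : 0 < k) (ha : agree k (c :: x) (x.drop q)) : x[q]? = some c := by
    simpa using getElem?_eq_of_agree ha hk
  have second {k q : ℕ} (hk : 1 < k) (ha : agree k (c :: x) (x.drop q)) : x[0]? = x[q + 1]? := by
    simpa using (getElem?_eq_of_agree ha hk).symm
  refine h (Eq.trans (minRunWeight_eq_baseWeight fun i hi ha => ?_) ?_)
  · simp only [List.drop_drop, List.drop_succ_cons] at ha
    match i with
    | 0 => exact h4 (first (by simp) ha)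
    | 1 => exact h5 (second (by simp) ha) (first (by simp) ha)
    | 2 => exact h6 (second (by simp) ha) (first (by simp) ha)
    | 3 => exact h7 (first (by simp) ha)
  · by_contra hb
    rcases getElem?_of_baseWeight_cons_ne hb with hb | ⟨h0, h1, hb⟩
    exacts [h4 hb, h2 h0 h1 hb]

theorem exists_card_le_three_of_coreWeight_cons_ne (x : List (Fin 6)) :
    ∃ S : Finset (Option (Fin 6)), S.card ≤ 3 ∧ ∀ c : Fin 6,
      x[0]? ≠ some c → x[1]? ≠ some c → coreWeight (c :: x) ≠ 11699 → some c ∈ S := by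
  by_cases h : x[0]? = x[5]? ∧ x[1]? = x[4]?
  · refine ⟨{x[2]?, x[6]?, x[7]?}, Finset.card_le_three, fun c h0 h1 hc => ?_⟩
    have := getElem?_of_coreWeight_cons_ne hc
    grind
  · by_cases h' : x[0]? = x[6]?
    · refine ⟨{x[4]?, x[5]?, x[7]?}, Finset.card_le_three, fun c h0 _ hc => ?_⟩
      have := getElem?_of_coreWeight_cons_ne hc
      grind
    · refine ⟨{x[4]?, x[6]?, x[7]?}, Finset.card_le_three, fun c _ _ hc => ?_⟩
      have := getElem?_of_coreWeight_cons_ne hc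
      grind

/-- Only three letters can have a weight below the maximum, and at least four are available. -/
theorem le_freeSum_of_length_near_le_two (h : (near 8 x).length ≤ 2) :
    11699 + 3 * 7789 ≤ freeSum x fun c => coreWeight (c :: x) := by
  obtain ⟨S, hS, hlow⟩ := exists_card_le_three_of_coreWeight_cons_ne x
  set free : Finset (Fin 6) := (near 8 x).toFinsetᶜ with hfree
  have hcard : 4 ≤ free.card := by
    rw [Finset.card_compl, Fintype.card_fin]
    have := (near 8 x).toFinset_card_le
    lia
  obtain ⟨_, hmem, hnot⟩ := Finset.exists_mem_notMem_of_card_lt_card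
    (s := S) (t := free.map Function.Embedding.some) (by rw [Finset.card_map]; lia)
  obtain ⟨c, hc, rfl⟩ := Finset.mem_map.1 hmem
  have hcnear : c ∉ near 8 x := by simpa [hfree] using hc
  have hmax : coreWeight (c :: x) = 11699 := by
    by_contra hne
    exact hnot (hlow c (fun h0 => hcnear (mem_near_of_getElem? zero_le_one (by norm_num) h0))
      (fun h1 => hcnear (mem_near_of_getElem? le_rfl (by norm_num) h1)) hne)
  have hrest : (free.erase c).card • 7789 ≤ ∑ d ∈ free.erase c, coreWeight (d :: x) :=
    Finset.card_nsmul_le_sum _ _ _ fun d _ => le_coreWeight (d :: x)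
  have hsum : freeSum x (fun c => coreWeight (c :: x)) = ∑ d ∈ free, coreWeight (d :: x) := by
    simp [freeSum, hfree, ← Finset.sum_ite_mem_eq]
  rw [hsum, ← Finset.add_sum_erase _ _ hc, hmax]
  rw [Finset.card_erase_of_mem hc, smul_eq_mul] at hrest
  lia

end FewNearLetters

section Search

variable {g m n : ℕ} {r s p l : List (Fin 6)}

/-- The inequality of the theorem at `r` for the coefficient `g`. No sum is computed when at most
two letters are near, by `le_freeSum_of_length_near_le_two`. -/
def checkSum (g : ℕ) (r : List (Fin 6)) : Bool :=
  (near 8 r).length ≤ 2 || 27195 * g ≤ 9091 * freeSum r fun c => coreWeight (c :: r)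

/-- All the inequalities of the theorem at `r`. The letters that may be inserted are restricted by
`mem_completions_of_two_lt_length_near`. -/
def checkWord (r : List (Fin 6)) : Bool :=
  startsNear 8 r || (checkSum (coreWeight r) r &&
    (completions 6 0 r (r.drop 2)).all fun a =>
      r.head? = some a || checkSum (coreWeight r) (a :: r))

/-- The check of all the words obtained from `r` by adding successive letters of `s`, until a square
of period at most `8` appears. -/
def checkExtensions (s r : List (Fin 6)) : Bool :=
  checkWord r && match s with
    | [] => true
    | c :: s => c ∈ squareLetters 8 r || checkExtensions s (c :: r)

/-- The check of all the words `u ++ p` with `p` a prefix of `u`, where `u` extends the reversal of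
`r`, whose letters are `0, …, m - 1`, by at most `n` letters, a new letter being always the least
unused one. -/
def checkSquares (n m : ℕ) (r : List (Fin 6)) : Bool :=
  checkExtensions r.reverse r && match n with
    | 0 => true
    | n + 1 => ∀ c : Fin 6, m < c ∨ c ∈ squareLetters 8 r ∨ checkSquares n (max m (c + 1)) (c :: r)

theorem checkSquares_nil : checkSquares 8 0 [] := by
  decide +kernel

/-- The inequalities of the theorem at the word whose reversal is `r`. -/
def Balanced (r : List (Fin 6)) : Prop :=
  ∀ a : Option (Fin 6), r = [] ∨ a ≠ r.head? →
    27195 * weight r ≤ 9091 * ∑ c, weight (c :: (a.toList ++ r))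

theorem le_sum_of_length_near_le_two (h : (near 8 r).length ≤ 2) (hg : g ≤ 11699) :
    27195 * g ≤ 9091 * ∑ c, weight (c :: r) := by
  have := le_freeSum_of_length_near_le_two h
  rw [freeSum_coreWeight] at this
  lia

theorem le_sum_of_checkSum (h : checkSum g r) (hg : g ≤ 11699) :
    27195 * g ≤ 9091 * ∑ c, weight (c :: r) := by
  rcases Bool.or_eq_true_iff.1 h with h | h
  · exact le_sum_of_length_near_le_two (of_decide_eq_true h) hg
  · simpa only [freeSum_coreWeight] using of_decide_eq_true h

theorem mem_completions_of_two_lt_length_near {a : Fin 6} (h : 2 < (near 8 (a :: r)).length) :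
    a ∈ completions 6 0 r (r.drop 2) := by
  rcases r with _ | ⟨b, _ | ⟨d, r⟩⟩
  · exact absurd h (Nat.not_lt.2 one_le_two)
  · exact absurd h (lt_irrefl 2)
  · refine mem_completions_of_completions_cons_ne_nil (s := r) (b := d) fun hnil => ?_
    rw [near, completions_succ_cons, if_pos (agree_zero _ _), hnil] at h
    exact lt_irrefl _ h

theorem balanced_of_checkWord (h : checkWord r) : Balanced r := by
  intro a ha
  by_cases hnear : startsNear 8 r
  · simp only [weight, if_pos hnear, mul_zero, Nat.zero_le]
  · rw [checkWord, Bool.or_eq_true_iff] at h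
    obtain ⟨hskip, hletter⟩ := Bool.and_eq_true_iff.1 (h.resolve_left hnear)
    rw [weight, if_neg hnear]
    rcases a with _ | a
    · exact le_sum_of_checkSum hskip (coreWeight_le r)
    · rcases le_or_gt (near 8 (a :: r)).length 2 with htwo | htwo
      · exact le_sum_of_length_near_le_two htwo (coreWeight_le r)
      · have hmem := mem_completions_of_two_lt_length_near htwo
        rcases Bool.or_eq_true_iff.1 (List.all_eq_true.1 hletter a hmem) with hhead | hcheck
        · rcases ha with rfl | ha
          exacts [absurd hhead (by simp), absurd (of_decide_eq_true hhead).symm ha]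
        · exact le_sum_of_checkSum hcheck (coreWeight_le r)

theorem hasSq_or_balanced_of_checkExtensions (h : checkExtensions s r) (hp : p <+: s) :
    HasSq 1 8 (p.reverse ++ r) ∨ Balanced (p.reverse ++ r) := by
  induction s generalizing p r with
  | nil =>
    obtain rfl := List.prefix_nil.1 hp
    exact Or.inr (balanced_of_checkWord (Bool.and_eq_true_iff.1 h).1)
  | cons c s ih =>
    rw [checkExtensions, Bool.and_eq_true, Bool.or_eq_true] at h
    rcases p with _ | ⟨d, p⟩
    · exact Or.inr (balanced_of_checkWord h.1)
    · obtain ⟨rfl, hps⟩ := List.cons_prefix_cons.1 hp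
      rw [List.reverse_cons, List.append_assoc, List.singleton_append]
      rcases h.2 with hsq | hrec
      · exact Or.inl ((hasSq_cons_of_mem_squareLetters (of_decide_eq_true hsq)).of_infix
          (List.suffix_append _ _).isInfix)
      · exact ih hrec hps

/-- A word over letters where, after `m` letters have been used, a new letter is always the least
unused one. -/
def RestrictedGrowth {q : ℕ} : ℕ → List (Fin q) → Prop
  | _, [] => True
  | m, c :: l => c ≤ m ∧ RestrictedGrowth (max m (c + 1)) l

theorem RestrictedGrowth.of_append {q m : ℕ} {l l' : List (Fin q)}
    (h : RestrictedGrowth m (l ++ l')) : RestrictedGrowth m l := by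
  induction l generalizing m with
  | nil => trivial
  | cons c l ih => exact ⟨h.1, ih h.2⟩

theorem hasSq_or_balanced_of_checkSquares (h : checkSquares n m r) (hl : l.length ≤ n)
    (hgrowth : RestrictedGrowth m l) (hp : p <+: r.reverse ++ l) :
    HasSq 1 8 (p.reverse ++ (l.reverse ++ r)) ∨ Balanced (p.reverse ++ (l.reverse ++ r)) := by
  induction l generalizing n m r with
  | nil =>
    rw [checkSquares.eq_def, Bool.and_eq_true] at h
    exact hasSq_or_balanced_of_checkExtensions h.1 (by simpa using hp)
  | cons c l ih =>
    obtain ⟨n, rfl⟩ := Nat.exists_eq_succ_of_ne_zero (Nat.ne_zero_of_lt hl)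
    rw [checkSquares, Bool.and_eq_true, decide_eq_true_eq] at h
    rw [List.reverse_cons, List.append_assoc, List.singleton_append]
    rcases h.2 c with hlt | hsq | hrec
    · exact absurd hgrowth.1 hlt.not_ge
    · exact Or.inl ((hasSq_cons_of_mem_squareLetters hsq).of_infix
        ((List.suffix_append _ _).trans (List.suffix_append _ _)).isInfix)
    · exact ih hrec (Nat.le_of_succ_le_succ hl) hgrowth.2 (by simpa using hp)

end Search

section Coefficients

variable {v w : List (Fin 6)}

theorem restrictedGrowth_of_normalized {q m : ℕ} {x y : List (Fin q)} (h : Normalized (x ++ y))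
    (hx : ∀ d : Fin q, d ∈ x ↔ d < m) : RestrictedGrowth m y := by
  induction y generalizing x m with
  | nil => trivial
  | cons c y ih =>
    have hc : c ≤ m := by
      by_contra! hlt
      let d : Fin q := ⟨m, hlt.trans c.isLt⟩
      have hcx : c ∉ x := fun hmem => ((hx c).1 hmem).not_gt hlt
      have hdx : d ∉ x := fun hmem => lt_irrefl m ((hx d).1 hmem)
      have hfix : x.map (Equiv.swap c d) = x := by
        refine (List.map_congr_left fun e he => ?_).trans x.map_id
        exact Equiv.swap_apply_of_ne_of_ne (ne_of_mem_of_not_mem he hcx)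
          (ne_of_mem_of_not_mem he hdx)
      refine h (Equiv.swap c d) ?_
      rw [List.map_append, hfix, List.map_cons, Equiv.swap_apply_left]
      exact List.Lex.append_left _ (List.Lex.rel (Fin.lt_def.2 hlt)) x
    refine ⟨hc, ih (x := x ++ [c]) (by simpa using h) fun d => ?_⟩
    rw [List.mem_append, hx, List.mem_singleton, Fin.ext_iff]
    lia

theorem hasSq_or_balanced_of_mem_Lam (hv : v ∈ Lam 1 8) : HasSq 1 8 v ∨ Balanced v.reverse := by
  obtain ⟨hnorm, s, ⟨⟨u, -, hu8, rfl⟩, -⟩, hvs, -⟩ := hv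
  have hgrowth : RestrictedGrowth 0 v := restrictedGrowth_of_normalized (x := []) hnorm (by simp)
  obtain ⟨l, p, rfl, hl, hpl⟩ : ∃ l p, v = l ++ p ∧ l.length ≤ 8 ∧ p <+: l := by
    rcases le_total v.length u.length with h | h
    · exact ⟨v, [], (List.append_nil v).symm, h.trans hu8, List.nil_prefix⟩
    · obtain ⟨p, rfl⟩ := List.prefix_of_prefix_length_le (List.prefix_append u u) hvs h
      exact ⟨u, p, rfl, hu8, (List.prefix_append_right_inj u).1 hvs⟩
  have := hasSq_or_balanced_of_checkSquares checkSquares_nil hl hgrowth.of_append hpl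
  rwa [List.append_nil, ← List.reverse_append, hasSq_reverse] at this

/-- The coefficient `C_w`. Words with a square of period at most `8`, which the sums of the theorem
exclude, get `0`. -/
noncomputable def coeff (w : List (Fin 6)) : ℕ := if HasSq 1 8 w then 0 else weight w.reverse

theorem coeff_le (w : List (Fin 6)) : coeff w ≤ 11699 := by
  unfold coeff
  split_ifs
  exacts [Nat.zero_le _, weight_le _]

theorem coeff_eq_zero_or_le (w : List (Fin 6)) : coeff w = 0 ∨ 7789 ≤ coeff w := by
  unfold coeff
  split_ifs
  exacts [Or.inl rfl, weight_eq_zero_or_le _]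

theorem coeff_le_of_map_suffix {π : Equiv.Perm (Fin 6)} (h : v.map π <:+ w) :
    coeff w ≤ coeff v := by
  by_cases hw : HasSq 1 8 w
  · rw [coeff, if_pos hw]
    exact Nat.zero_le _
  · have hv : ¬ HasSq 1 8 v := fun hv => hw ((hv.map π).of_infix h.isInfix)
    obtain ⟨t, rfl⟩ := h
    rw [coeff, coeff, if_neg hw, if_neg hv, List.reverse_append, ← List.map_reverse]
    exact weight_map_append_le π _ _

theorem exists_map_lamOf_suffix {A : Type*} [LinearOrder A] (lo hi : ℕ) (w : List A) :
    ∃ π : Equiv.Perm A, (lamOf lo hi w).map π <:+ w := by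
  unfold lamOf
  split_ifs with h
  exacts [h.choose_spec.1.2, ⟨1, List.nil_suffix⟩]

theorem weight_cons_reverse_le (hw : ¬ HasSq 1 8 w) (b : Fin 6) :
    weight (b :: w.reverse) ≤
      if ¬ HasSq 1 8 (w ++ [b]) then coeff (lamOf 1 8 (w ++ [b])) else 0 := by
  have hrev : b :: w.reverse = (w ++ [b]).reverse := by simp
  split_ifs with h
  · have hsq : HasSq 1 8 (b :: w.reverse) := hrev ▸ h.reverse
    exact (if_pos (startsNear_of_hasSq_cons hsq (hasSq_reverse.not.2 hw))).le
  · obtain ⟨π, hπ⟩ := exists_map_lamOf_suffix 1 8 (w ++ [b])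
    calc weight (b :: w.reverse) = coeff (w ++ [b]) := by rw [coeff, if_neg h, hrev]
      _ ≤ coeff (lamOf 1 8 (w ++ [b])) := coeff_le_of_map_suffix hπ

theorem coeff_mul_le (hv : v ∈ Lam 1 8) {a : Option (Fin 6)} (ha : v = [] ∨ a ≠ v.getLast?) :
    27195 * coeff v ≤ 9091 * ∑ b : Fin 6, if ¬ HasSq 1 8 (v ++ a.toList ++ [b]) then
      coeff (lamOf 1 8 (v ++ a.toList ++ [b])) else 0 := by
  by_cases h0 : coeff v = 0
  · rw [h0, mul_zero]
    exact Nat.zero_le _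
  have hsq : ¬ HasSq 1 8 v := fun h => h0 (if_pos h)
  have hcoeff : coeff v = weight v.reverse := if_neg hsq
  have hnear : ¬ startsNear 8 v.reverse := fun h => h0 (hcoeff.trans (if_pos h))
  have hlast : v.reverse = [] ∨ a ≠ v.reverse.head? := by
    rwa [List.reverse_eq_nil_iff, List.head?_reverse]
  have hrev : (v ++ a.toList).reverse = a.toList ++ v.reverse := by cases a <;> simp
  have hsq' : ¬ HasSq 1 8 (v ++ a.toList) := by
    rw [← hasSq_reverse, hrev]
    rcases a with _ | a
    · exact hasSq_reverse.not.2 hsq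
    · refine not_hasSq_cons (hasSq_reverse.not.2 hsq) hnear fun hhead => ?_
      rcases hlast with hnil | hne
      exacts [by simp [hnil] at hhead, hne hhead.symm]
  calc 27195 * coeff v = 27195 * weight v.reverse := by rw [hcoeff]
    _ ≤ 9091 * ∑ b, weight (b :: (v ++ a.toList).reverse) := by
      rw [hrev]
      exact (hasSq_or_balanced_of_mem_Lam hv).resolve_left hsq a hlast
    _ ≤ _ := by
      gcongr with b
      exact weight_cons_reverse_le hsq' b

theorem coeff_zero : coeff [0] = 11699 := by
  have hsq : ¬ HasSq 1 8 ([0] : List (Fin 6)) := by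
    rintro ⟨u, h1, -, h3⟩
    have hlen : u.length + u.length ≤ 1 := by simpa using h3.length_le
    lia
  rw [coeff, if_neg hsq]
  rfl

end Coefficients

end SquareWeight

/-- Over the alphabet `Fin 6` with `p = 8`, there exist nonnegative coefficients
`(C_w)_{w ∈ Λ}` with `C_[0] > 0`, every coefficient at most `11699` and either `0` or at
least `6806`, such that for every `v ∈ Λ` and every `a` that is either the empty word or
a letter different from the last letter of `v` (any `a` when `v = ε`),
`(27195/9091)·C_v ≤ Σ_{b, vab square-free of period ≤ 8} C_{Λ(vab)}`. -/
theorem stmt_8 :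
    ∃ C : List (Fin 6) → ℝ,
      (∀ v ∈ Lam 1 8, 0 ≤ C v) ∧
      0 < C [0] ∧
      (∀ v ∈ Lam 1 8, C v ≤ 11699 ∧ (C v = 0 ∨ 6806 ≤ C v)) ∧
      (∀ v ∈ Lam 1 8, ∀ a : Option (Fin 6), (v = [] ∨ a ≠ v.getLast?) →
        (27195 / 9091 : ℝ) * C v ≤
          ∑ b : Fin 6,
            if ¬ HasSq 1 8 (v ++ a.toList ++ [b]) then
              C (lamOf 1 8 (v ++ a.toList ++ [b]))
            else 0) := by
  refine ⟨fun w => SquareWeight.coeff w, ?_⟩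
  beta_reduce
  refine ⟨fun v _ => (SquareWeight.coeff v).cast_nonneg, ?_, fun v _ => ⟨?_, ?_⟩,
    fun v hv a ha => ?_⟩
  · rw [SquareWeight.coeff_zero]
    norm_num
  · exact_mod_cast SquareWeight.coeff_le v
  · refine (SquareWeight.coeff_eq_zero_or_le v).imp Nat.cast_eq_zero.2 fun h => ?_
    exact_mod_cast (show 6806 ≤ 7789 by norm_num).trans h
  · rw [div_mul_eq_mul_div, div_le_iff₀' (by norm_num)]
    exact_mod_cast SquareWeight.coeff_mul_le hv ha
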